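/- Let A = ⊕_{i∈ℤ} A_i be a ℤ-graded ring with A_i = 0 for all i < 0 and with A_0 left artinian, and let J := rad(A_0) ⊕ (⊕_{i≥1} A_i), where rad(A_0) is the Jacobson radical of A_0. Let X be a ℤ-graded left A-module such that X_j = 0 for all sufficiently small j. Then there exist a ℤ-graded left A-module P which is a direct sum of degree-shifted copies of graded modules of the form Ae with e an idempotent of A_0, and a surjective degree-preserving homomorphism f : P → X of graded A-modules, such that ker f ⊆ J·P and (ker f)_j = 0 for all sufficiently small j. -/

import Mathlib

/-!
Statement 2.  Let `A = ⊕_{i∈ℤ} A_i` be a ℤ-graded ring with `A_i = 0` for `i < 0` and `A_0`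
left artinian, and let `J := rad(A_0) ⊕ (⊕_{i≥1} A_i)`.  Every ℤ-graded left `A`-module `X`
with `X_j = 0` for `j ≪ 0` admits a surjective degree-preserving homomorphism `f : P → X` of
graded modules, where `P` is a direct sum of degree-shifted copies of modules `A·e` with `e`
an idempotent of `A_0`, such that `ker f ⊆ J·P` and `(ker f)_j = 0` for `j ≪ 0`.
-/

universe u

open DirectSum

section ProjDim

/-- `pdLE R n M` means `M` admits a projective resolution of length at most `n`
(in the category of all `R`-modules). -/
def pdLE (R : Type u) [Ring R] : ℕ → ∀ (M : Type u) [AddCommGroup M] [Module R M], Prop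
  | 0, M, _, _ => Module.Projective R M
  | n+1, M, _, _ => ∃ (P : Type u) (_ : AddCommGroup P) (_ : Module R P)
      (f : P →ₗ[R] M), Module.Projective R P ∧ Function.Surjective f ∧
      pdLE R n ↥(LinearMap.ker f)

/-- The projective dimension of a module, as an element of `ℕ∞` (`⊤` if no finite
projective resolution exists). -/
noncomputable def projDim (R : Type u) [Ring R] (M : Type u) [AddCommGroup M]
    [Module R M] : ℕ∞ :=
  ⨅ (n : ℕ) (_ : pdLE R n M), (n : ℕ∞)

/-- The (left) global dimension of a ring: the supremum of the projective dimensions of all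
left modules.  (The right global dimension of `A` is `globalDim Aᵐᵒᵖ`.) -/
noncomputable def globalDim (R : Type u) [Ring R] : ℕ∞ :=
  ⨆ (M : ModuleCat.{u} R), projDim R M

end ProjDim

section Graded

variable (A : Type u) [Ring A] (𝒜 : ℤ → AddSubgroup A)

/-- A grading `ℳ` on a left `A`-module `M` compatible with the grading `𝒜` on `A`:
`M = ⊕_j ℳ j` and `𝒜 i • ℳ j ⊆ ℳ (i + j)`. -/
def IsGradedModule (M : Type u) [AddCommGroup M] [Module A M]
    (ℳ : ℤ → AddSubgroup M) : Prop :=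
  DirectSum.IsInternal ℳ ∧
    ∀ (i j : ℤ) (a : A) (m : M), a ∈ 𝒜 i → m ∈ ℳ j → a • m ∈ ℳ (i + j)

/-- A grading on a right `A`-module (= left `Aᵐᵒᵖ`-module): `ℳ j • 𝒜 i ⊆ ℳ (j + i)`. -/
def IsGradedRightModule (M : Type u) [AddCommGroup M] [Module Aᵐᵒᵖ M]
    (ℳ : ℤ → AddSubgroup M) : Prop :=
  DirectSum.IsInternal ℳ ∧
    ∀ (i j : ℤ) (a : A) (m : M), a ∈ 𝒜 i → m ∈ ℳ j → (MulOpposite.op a) • m ∈ ℳ (j + i)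

/-- A submodule `p` is graded (w.r.t. the grading `ℳ`) if it is the (internal direct) sum of
its homogeneous parts `p ∩ ℳ j`. -/
def IsGradedSubmodule {R : Type*} [Ring R] {M : Type u} [AddCommGroup M] [Module R M]
    (ℳ : ℤ → AddSubgroup M) (p : Submodule R M) : Prop :=
  p.toAddSubgroup = ⨆ j : ℤ, (p.toAddSubgroup ⊓ ℳ j)

/-- A graded-simple left `A`-module: a nonzero graded module whose only graded submodules
are `⊥` and `⊤`. -/
def IsGradedSimple (M : Type u) [AddCommGroup M] [Module A M]
    (ℳ : ℤ → AddSubgroup M) : Prop :=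
  IsGradedModule A 𝒜 M ℳ ∧ Nontrivial M ∧
    ∀ p : Submodule A M, IsGradedSubmodule ℳ p → p = ⊥ ∨ p = ⊤

/-- A graded-simple right `A`-module. -/
def IsGradedSimpleRight (M : Type u) [AddCommGroup M] [Module Aᵐᵒᵖ M]
    (ℳ : ℤ → AddSubgroup M) : Prop :=
  IsGradedRightModule A 𝒜 M ℳ ∧ Nontrivial M ∧
    ∀ p : Submodule Aᵐᵒᵖ M, IsGradedSubmodule ℳ p → p = ⊥ ∨ p = ⊤

end Graded

section GradedCover

variable (A : Type u) [Ring A] (𝒜 : ℤ → AddSubgroup A) [GradedRing 𝒜]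

/-- The ideal `J = rad(A₀) ⊕ (⊕_{i ≥ 1} A_i)` of a nonnegatively graded ring, as a set:
the elements whose degree-`0` component lies in the Jacobson radical of `A₀` and whose
negative-degree components vanish. -/
def gradedRadical : Set A :=
  {a : A | (DirectSum.decompose 𝒜 a 0 ∈ Ideal.jacobson (⊥ : Ideal ↥(𝒜 0))) ∧
    ∀ i : ℤ, i < 0 → DirectSum.decompose 𝒜 a i = 0}

variable (ι : Type u) (e : ι → A)

/-- The direct sum `⊕_{k : ι} A·(e k)` of the cyclic left modules generated by
the elements `e k`. -/
abbrev freeIdemModule := ⨁ (k : ι), ↥(Submodule.span A ({e k} : Set A))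

variable (s : ι → ℤ)

/-- The grading on `⊕_k (A e k)(−s k)`: the degree-`j` part consists of those elements whose
`k`-component lies in `𝒜 (j - s k)` (i.e. each summand `A e k` carries the grading induced
from `A`, shifted by `s k`). -/
def freeIdemGrading (j : ℤ) : AddSubgroup (freeIdemModule A ι e) where
  carrier := {x | ∀ k : ι, (x k : A) ∈ 𝒜 (j - s k)}
  add_mem' := by
    intro x y hx hy k
    rw [DirectSum.add_apply]
    exact add_mem (hx k) (hy k)
  zero_mem' := by
    intro k
    rw [DirectSum.zero_apply]
    exact zero_mem _
  neg_mem' := by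
    intro x hx k
    rw [show ((-x) k) = -(x k) from rfl]
    exact neg_mem (hx k)

end GradedCover

/-!
The `A_0`-module `X_j` modulo `(J X)_j = rad(A_0) X_j + (A X_{<j})_j` is semisimple. Decompose it
into simple modules; each is generated by the class of some `m = e m` in `X_j`, with `e` an
idempotent of `A_0` such that `r m` lies in `(J X)_j` only if `r e` lies in `rad(A_0)`. Sending `e`
to `m` for all these pairs, in all degrees `j`, defines `P → X`. As `rad(A_0)` is nilpotent and `X`
is bounded below, Nakayama's lemma applied degree by degree from below gives surjectivity. A
homogeneous element of the kernel of degree `j` has coordinates of positive degree, which lie in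
`J`, and coordinates of degree zero, which lie in `rad(A_0)` because the chosen simple modules in
degree `j` are independent.
-/

section IdempotentBasis

variable {R V : Type*} [Ring R] [AddCommGroup V] [Module R V]

theorem le_of_le_sup_smul_of_isNilpotent {I : Ideal R} [I.IsTwoSided] (hI : IsNilpotent I)
    {M F : Submodule R V} (h : M ≤ F ⊔ I • M) : M ≤ F := by
  have le_sup_pow_smul (n : ℕ) : M ≤ F ⊔ I ^ n • M := by
    induction n with
    | zero => rw [Submodule.pow_zero, Ideal.one_eq_top, Submodule.top_smul]; exact le_sup_right
    | succ n ih =>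
      calc M ≤ F ⊔ I • M := h
        _ ≤ F ⊔ I • (F ⊔ I ^ n • M) := sup_le_sup_left (smul_mono_right _ ih) _
        _ = F ⊔ I • F ⊔ I ^ (n + 1) • M := by
          rw [Submodule.smul_sup, Ideal.IsTwoSided.pow_succ, Submodule.mul_smul, sup_assoc]
        _ = F ⊔ I ^ (n + 1) • M := by
          rw [sup_eq_left.2 (Submodule.smul_le_right : I • F ≤ F)]
  obtain ⟨n, hn⟩ := hI
  simpa only [hn, Submodule.zero_eq_bot, Submodule.bot_smul, sup_bot_eq] using le_sup_pow_smul n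

theorem isSemisimpleModule_of_isTorsionBySet {I : Ideal R} [I.IsTwoSided]
    [IsSemisimpleRing (R ⧸ I)] (h : Module.IsTorsionBySet R V I) : IsSemisimpleModule R V :=
  let _ := h.module
  (h.semilinearMap.isSemisimpleModule_iff_of_bijective Function.bijective_id).2 inferInstance

theorem exists_isIdempotentElem_mem_ideal_iff_mul_eq_zero [IsSemisimpleRing R] (L : Ideal R) :
    ∃ f : R, IsIdempotentElem f ∧ ∀ r, r ∈ L ↔ r * f = 0 := by
  obtain ⟨g, hg, rfl⟩ := IsSemisimpleRing.ideal_eq_span_idempotent L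
  refine ⟨1 - g, hg.one_sub, fun r ↦ ?_⟩
  rw [Ideal.mem_span_singleton', mul_sub, mul_one, sub_eq_zero]
  refine ⟨?_, fun hr ↦ ⟨r, hr.symm⟩⟩
  rintro ⟨b, rfl⟩
  rw [mul_assoc, hg.eq]

-- The condition on `e` says that `R ∙ q ≅ R e ⧸ I e`.
theorem exists_isIdempotentElem_smul_eq_zero_iff {I : Ideal R} [I.IsTwoSided]
    [IsSemisimpleRing (R ⧸ I)] (hI : ∀ r ∈ I, IsNilpotent r) {q : V} (hq : ∀ r ∈ I, r • q = 0) :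
    ∃ e : R, IsIdempotentElem e ∧ ∀ r : R, r • q = 0 ↔ r * e ∈ I := by
  let π := Ideal.Quotient.mk I
  have hπ : Function.Surjective π := Ideal.Quotient.mk_surjective
  let L : Ideal R := LinearMap.ker (LinearMap.toSpanSingleton R V q)
  have hIL : RingHom.ker π ≤ L := fun r hr ↦ hq r (by rwa [Ideal.mk_ker] at hr)
  obtain ⟨f, hf, hLf⟩ := exists_isIdempotentElem_mem_ideal_iff_mul_eq_zero (L.map π)
  obtain ⟨e, he, rfl⟩ := exists_isIdempotentElem_eq_of_ker_isNilpotent π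
    (fun x hx ↦ hI x (by rwa [Ideal.mk_ker] at hx)) f (hπ f) hf
  refine ⟨e, he, fun r ↦ ?_⟩
  calc r • q = 0 ↔ r ∈ (L.map π).comap π := by
        rw [Ideal.comap_map_of_surjective' π hπ, sup_eq_left.2 hIL]; rfl
    _ ↔ π (r * e) = 0 := by rw [Ideal.mem_comap, hLf, map_mul]
    _ ↔ r * e ∈ I := Ideal.Quotient.eq_zero_iff_mem

theorem exists_iSupIndep_span_singleton {V : Type u} [AddCommGroup V] [Module R V]
    (Q : Submodule R V) [IsSemisimpleModule R Q] :
    ∃ (κ : Type u) (q : κ → V), (∀ k, q k ≠ 0) ∧ iSupIndep (fun k ↦ Submodule.span R {q k}) ∧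
      Submodule.span R (Set.range q) = Q := by
  obtain ⟨S, hind, hsup, hsimple⟩ := IsSemisimpleModule.exists_sSupIndep_sSup_simples_eq_top R Q
  have exists_generator (T : S) : ∃ q : Q, q ≠ 0 ∧ Submodule.span R {q} = T.1 := by
    have := hsimple T T.2
    have := IsSimpleModule.nontrivial R T.1
    obtain ⟨q, hq⟩ := exists_ne (0 : T.1)
    refine ⟨q, by simpa using hq, ?_⟩
    simpa [Submodule.map_span] using
      congrArg (Submodule.map T.1.subtype) (IsSimpleModule.span_singleton_eq_top R hq)
  choose q hq hspan using exists_generator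
  refine ⟨S, fun T ↦ q T, by simpa using hq, ?_, ?_⟩
  · have : iSupIndep fun T ↦ Submodule.span R {q T} := by
      simpa only [hspan] using (sSupIndep_iff S).1 hind
    simpa [Submodule.map_span] using
      LinearMap.iSupIndep_map Q.subtype Q.subtype_injective this
  · have : Submodule.span R (Set.range q) = ⊤ := by
      rw [Submodule.span_range_eq_iSup, ← hsup, sSup_eq_iSup']
      exact iSup_congr hspan
    simpa [Submodule.map_span, ← Set.range_comp, Function.comp_def] using
      congrArg (Submodule.map Q.subtype) this

/-- Idempotents `e k` and elements `m k = e k • m k` of `M` such that `⨁ k, R (e k) → M ⧸ (M ⊓ N)`,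
`e k ↦ m k`, is surjective with kernel contained in `I`. The kernel condition is expressed by
isolating one coordinate at a time. -/
structure IsIdempotentBasisMod (I : Ideal R) (M N : Submodule R V) {κ : Type*}
    (e : κ → R) (m : κ → V) : Prop where
  isIdempotentElem : ∀ k, IsIdempotentElem (e k)
  mem : ∀ k, m k ∈ M
  ne_zero : ∀ k, m k ≠ 0
  smul_eq : ∀ k, e k • m k = m k
  le_sup : M ≤ Submodule.span R (Set.range m) ⊔ N
  mul_mem : ∀ k r, r • m k ∈ Submodule.span R (m '' {k}ᶜ) ⊔ N → r * e k ∈ I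

theorem exists_isIdempotentBasisMod {V : Type u} [AddCommGroup V] [Module R V] {I : Ideal R}
    [I.IsTwoSided] [IsSemisimpleRing (R ⧸ I)] (hI : ∀ r ∈ I, IsNilpotent r)
    {M N : Submodule R V} (hN : I • M ≤ N) :
    ∃ (κ : Type u) (e : κ → R) (m : κ → V), IsIdempotentBasisMod I M N e m := by
  have smul_mkQ_eq_zero (r : R) (hr : r ∈ I) (q : V ⧸ N) (hq : q ∈ M.map N.mkQ) : r • q = 0 := by
    obtain ⟨x, hx, rfl⟩ := hq
    exact (Submodule.Quotient.mk_eq_zero N).2 (hN (Submodule.smul_mem_smul hr hx))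
  have : IsSemisimpleModule R (M.map N.mkQ) := isSemisimpleModule_of_isTorsionBySet (I := I)
    fun q r ↦ Subtype.ext (smul_mkQ_eq_zero r r.2 q q.2)
  obtain ⟨κ, q, hq0, hind, hspan⟩ := exists_iSupIndep_span_singleton (M.map N.mkQ)
  have hq (k : κ) : q k ∈ M.map N.mkQ := hspan ▸ Submodule.subset_span ⟨k, rfl⟩
  choose e he hann using fun k ↦ exists_isIdempotentElem_smul_eq_zero_iff hI
    fun r hr ↦ smul_mkQ_eq_zero r hr (q k) (hq k)
  choose x hxM hxq using hq
  have smul_q (k : κ) : e k • q k = q k := by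
    have : (1 - e k) • q k = 0 := (hann k _).2 (by simp [(he k).one_sub_mul_self])
    simpa [sub_smul, sub_eq_zero, eq_comm] using this
  let m (k : κ) : V := e k • x k
  have mkQ_m (k : κ) : N.mkQ (m k) = q k := by rw [map_smul, hxq, smul_q]
  refine ⟨κ, e, m, he, fun k ↦ M.smul_mem _ (hxM k), fun k hk ↦ hq0 k ?_, fun k ↦ ?_, ?_,
    fun k r hr ↦ (hann k r).1 ?_⟩
  · rw [← mkQ_m, hk, map_zero]
  · rw [smul_smul, (he k).eq]
  · have : M.map N.mkQ ≤ (Submodule.span R (Set.range m)).map N.mkQ := by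
      rw [Submodule.map_span, ← Set.range_comp, ← hspan]
      simp [Function.comp_def, mkQ_m]
    simpa [Submodule.map_le_iff_le_comap, Submodule.comap_map_eq] using this
  · have hr' : r • q k ∈ ⨆ (l) (_ : l ≠ k), Submodule.span R {q l} := by
      have := Submodule.mem_map_of_mem (f := N.mkQ) hr
      simpa [Submodule.map_sup, Submodule.map_span, Set.image_eq_iUnion, Submodule.span_iUnion,
        Submodule.map_iSup, mkQ_m, -Submodule.mkQ_apply] using this
    exact Submodule.disjoint_def.1 (hind k) _
      (Submodule.smul_mem _ r (Submodule.mem_span_singleton_self _)) hr'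

end IdempotentBasis

section Grading

variable {ι κ M N : Type*} [DecidableEq ι] [DecidableEq κ] [AddCommGroup M] [AddCommGroup N]

theorem coe_decompose_map_coeAddMonoidHom {ℳ : ι → AddSubgroup M} {𝒩 : κ → AddSubgroup N}
    [Decomposition 𝒩] {σ : ι → κ} (hσ : Function.Injective σ) (f : M →+ N)
    (hf : ∀ i, ∀ x ∈ ℳ i, f x ∈ 𝒩 (σ i)) (y : ⨁ i, ℳ i) (i : ι) :
    (decompose 𝒩 (f (DirectSum.coeAddMonoidHom ℳ y)) (σ i) : N) = f (y i) := by
  induction y using DirectSum.induction_on with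
  | zero => simp
  | of l x =>
    rw [DirectSum.coeAddMonoidHom_of]
    by_cases h : l = i
    · subst h
      rw [decompose_of_mem_same 𝒩 (hf _ _ x.2), DirectSum.of_eq_same]
    · rw [decompose_of_mem_ne 𝒩 (hf _ _ x.2) (hσ.ne h), DirectSum.of_eq_of_ne _ _ _ (Ne.symm h),
        ZeroMemClass.coe_zero, map_zero]
  | add x y hx hy =>
    simp only [map_add, DirectSum.add_apply, AddSubgroup.coe_add, decompose_add, hx, hy]

theorem iSup_eq_top_of_span_eq_top [AddMonoid ι] {A : Type*} [Ring A] [Module A M]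
    (𝒜 : ι → AddSubgroup A) [GradedRing 𝒜] {ℳ : ι → AddSubgroup M}
    (smul_mem : ∀ i j, ∀ a ∈ 𝒜 i, ∀ x ∈ ℳ j, a • x ∈ ℳ (i + j))
    {S : Set M} (hS : ∀ x ∈ S, ∃ j, x ∈ ℳ j) (hspan : Submodule.span A S = ⊤) :
    ⨆ j, ℳ j = ⊤ := by
  classical
  have homogeneous_smul_mem (i : ι) (a : A) (ha : a ∈ 𝒜 i) (x : M) (hx : x ∈ ⨆ j, ℳ j) :
      a • x ∈ ⨆ j, ℳ j := by
    have : ⨆ j, ℳ j ≤ (⨆ j, ℳ j).comap (DistribSMul.toAddMonoidHom M a) :=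
      iSup_le fun j y hy ↦ AddSubgroup.mem_iSup_of_mem (i + j) (smul_mem i j a ha y hy)
    exact this hx
  refine eq_top_iff.2 fun x _ ↦ ?_
  induction (hspan ▸ Submodule.mem_top : x ∈ Submodule.span A S) using
    Submodule.span_induction with
  | mem x hx =>
    obtain ⟨j, hj⟩ := hS x hx
    exact AddSubgroup.mem_iSup_of_mem j hj
  | zero => exact zero_mem _
  | add x y _ _ hx hy => exact add_mem (hx trivial) (hy trivial)
  | smul a x _ hx =>
    rw [← sum_support_decompose 𝒜 a, Finset.sum_smul]
    exact sum_mem fun i _ ↦ homogeneous_smul_mem i _ (SetLike.coe_mem _) x (hx trivial)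

end Grading

theorem isGradedSubmodule_ker {R : Type*} [Ring R] {M N : Type u} [AddCommGroup M] [Module R M]
    [AddCommGroup N] [Module R N] {ℳ : ℤ → AddSubgroup M} {𝒩 : ℤ → AddSubgroup N}
    (hℳ : IsInternal ℳ) (h𝒩 : IsInternal 𝒩) (f : M →ₗ[R] N)
    (hf : ∀ j, ∀ x ∈ ℳ j, f x ∈ 𝒩 j) : IsGradedSubmodule ℳ (LinearMap.ker f) := by
  classical
  let _ := h𝒩.chooseDecomposition
  refine le_antisymm (fun x hx ↦ ?_) (iSup_le fun j ↦ inf_le_left)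
  obtain ⟨y, rfl⟩ := hℳ.2 x
  have component_mem_ker (j : ℤ) : f (y j) = 0 := by
    have := coe_decompose_map_coeAddMonoidHom Function.injective_id f.toAddMonoidHom hf y j
    rw [← LinearMap.toAddMonoidHom_coe, ← this]
    simp [show f (DirectSum.coeAddMonoidHom ℳ y) = 0 from hx]
  rw [← DirectSum.sum_support_of y, map_sum]
  refine sum_mem fun j _ ↦ AddSubgroup.mem_iSup_of_mem j ?_
  rw [DirectSum.coeAddMonoidHom_of]
  exact ⟨component_mem_ker j, (y j).2⟩

theorem mul_eq_self_of_mem_span_singleton {R : Type*} [Ring R] {f a : R} (hf : IsIdempotentElem f)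
    (ha : a ∈ Submodule.span R {f}) : a * f = a := by
  obtain ⟨b, rfl⟩ := Submodule.mem_span_singleton.1 ha
  rw [smul_eq_mul, mul_assoc, hf.eq]

section FreeIdemModule

variable {A : Type u} [Ring A] {ι : Type u} [DecidableEq ι] {e : ι → A}
  {X : Type u} [AddCommGroup X] [Module A X] {m : ι → X}

variable (e) in
/-- The generator `e k` of the `k`-th summand of `⨁ k, A (e k)`. -/
noncomputable def idemGenerator (k : ι) : freeIdemModule A ι e :=
  lof A ι (fun k ↦ ↥(Submodule.span A {e k})) k ⟨e k, Submodule.mem_span_singleton_self (e k)⟩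

variable (m) in
/-- The homomorphism `⨁ k, A (e k) → X` given by right multiplication by `m k` on the `k`-th
summand. -/
noncomputable def freeIdemLift : freeIdemModule A ι e →ₗ[A] X :=
  toModule A ι X fun k ↦
    LinearMap.toSpanSingleton A X (m k) ∘ₗ (Submodule.span A {e k}).subtype

theorem freeIdemLift_lof (k : ι) (y : ↥(Submodule.span A {e k})) :
    freeIdemLift m (lof A ι (fun k ↦ ↥(Submodule.span A {e k})) k y) = (y : A) • m k :=
  toModule_lof A (M := fun k ↦ ↥(Submodule.span A {e k})) k y

theorem freeIdemLift_apply_idemGenerator (k : ι) : freeIdemLift m (idemGenerator e k) = e k • m k :=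
  freeIdemLift_lof k _

theorem lof_eq_smul_idemGenerator {k : ι} {y : ↥(Submodule.span A {e k})} {a : A}
    (h : (y : A) = a * e k) :
    lof A ι (fun k ↦ ↥(Submodule.span A {e k})) k y = a • idemGenerator e k := by
  rw [idemGenerator, ← map_smul]
  exact congrArg _ (Subtype.ext h)

theorem span_range_idemGenerator : Submodule.span A (Set.range (idemGenerator e)) = ⊤ := by
  refine eq_top_iff.2 fun x _ ↦ ?_
  induction x using DirectSum.induction_on with
  | zero => exact zero_mem _
  | add x y hx hy => exact add_mem (hx trivial) (hy trivial)
  | of k y =>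
    obtain ⟨a, ha⟩ := Submodule.mem_span_singleton.1 y.2
    rw [← lof_eq_of A, lof_eq_smul_idemGenerator ha.symm]
    exact Submodule.smul_mem _ a (Submodule.subset_span ⟨k, rfl⟩)

theorem freeIdemLift_mem {W : AddSubgroup X} {x : freeIdemModule A ι e}
    (h : ∀ k, (x k : A) • m k ∈ W) : freeIdemLift m x ∈ W := by
  classical
  rw [← DirectSum.sum_support_of x, map_sum]
  refine sum_mem fun k _ ↦ ?_
  rw [← lof_eq_of A, freeIdemLift_lof]
  exact h k

theorem freeIdemLift_idemGenerator_eq_id (he : ∀ k, IsIdempotentElem (e k)) :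
    freeIdemLift (idemGenerator e) = LinearMap.id := by
  refine DirectSum.linearMap_ext A fun k ↦ LinearMap.ext fun y ↦ ?_
  rw [LinearMap.comp_apply, freeIdemLift_lof, LinearMap.id_comp]
  exact (lof_eq_smul_idemGenerator (mul_eq_self_of_mem_span_singleton (he k) y.2).symm).symm

omit [DecidableEq ι] in
theorem mem_span_smul_of_forall_coe_mem (he : ∀ k, IsIdempotentElem (e k)) {S : Set A}
    {x : freeIdemModule A ι e} (h : ∀ k, (x k : A) ∈ S) :
    x ∈ Submodule.span A {y : freeIdemModule A ι e | ∃ a ∈ S, ∃ p, y = a • p} := by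
  classical
  rw [← LinearMap.id_apply (R := A) x, ← freeIdemLift_idemGenerator_eq_id he]
  exact freeIdemLift_mem (W := (Submodule.span A _).toAddSubgroup)
    fun k ↦ Submodule.subset_span ⟨_, h k, _, rfl⟩

end FreeIdemModule

section FreeIdemGrading

variable {A : Type u} [Ring A] {𝒜 : ℤ → AddSubgroup A} {ι : Type u} {e : ι → A} {s : ι → ℤ}

theorem idemGenerator_mem_freeIdemGrading [DecidableEq ι] (he : ∀ k, e k ∈ 𝒜 0) (k : ι) :
    idemGenerator e k ∈ freeIdemGrading A 𝒜 ι e s (s k) := by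
  intro l
  by_cases h : k = l
  · subst h
    rw [idemGenerator, lof_apply, sub_self]
    exact he k
  · rw [idemGenerator, lof_eq_of, of_eq_of_ne _ _ _ (Ne.symm h)]
    exact zero_mem _

theorem eq_zero_of_mem_freeIdemGrading (hneg : ∀ i : ℤ, i < 0 → 𝒜 i = ⊥) {n j : ℤ}
    (hs : ∀ k, n ≤ s k) (hj : j < n) {x : freeIdemModule A ι e}
    (hx : x ∈ freeIdemGrading A 𝒜 ι e s j) : x = 0 := by
  ext k
  have := hx k
  rwa [hneg _ (sub_neg.2 (hj.trans_le (hs k)))] at this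

theorem freeIdemLift_mem_of_mem_freeIdemGrading [DecidableEq ι] {X : Type u} [AddCommGroup X]
    [Module A X] {𝒳 : ℤ → AddSubgroup X} (hX : IsGradedModule A 𝒜 X 𝒳) {m : ι → X}
    (hm : ∀ k, m k ∈ 𝒳 (s k)) {j : ℤ} {x : freeIdemModule A ι e}
    (hx : x ∈ freeIdemGrading A 𝒜 ι e s j) : freeIdemLift m x ∈ 𝒳 j :=
  freeIdemLift_mem fun k ↦ sub_add_cancel j (s k) ▸ hX.2 _ _ _ _ (hx k) (hm k)

variable [GradedRing 𝒜]

theorem smul_mem_freeIdemGrading (i j : ℤ) (a : A) (ha : a ∈ 𝒜 i) (x : freeIdemModule A ι e)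
    (hx : x ∈ freeIdemGrading A 𝒜 ι e s j) : a • x ∈ freeIdemGrading A 𝒜 ι e s (i + j) := by
  intro k
  rw [add_sub_assoc]
  exact SetLike.mul_mem_graded ha (hx k)

theorem injective_coeAddMonoidHom_freeIdemGrading :
    Function.Injective (DirectSum.coeAddMonoidHom (freeIdemGrading A 𝒜 ι e s)) := by
  refine (injective_iff_map_eq_zero _).2 fun y hy ↦ ?_
  ext j k
  let coord : freeIdemModule A ι e →ₗ[A] A :=
    (Submodule.span A {e k}).subtype ∘ₗ component A ι _ k
  have coord_y := coe_decompose_map_coeAddMonoidHom (sub_left_injective (b := s k))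
    coord.toAddMonoidHom (fun j x (hx : x ∈ freeIdemGrading A 𝒜 ι e s j) ↦ hx k) y j
  rw [hy] at coord_y
  simpa [coord, ← apply_eq_component] using coord_y.symm

theorem isGradedModule_freeIdemGrading (he : ∀ k, e k ∈ 𝒜 0) :
    IsGradedModule A 𝒜 (freeIdemModule A ι e) (freeIdemGrading A 𝒜 ι e s) := by
  classical
  refine ⟨⟨injective_coeAddMonoidHom_freeIdemGrading, ?_⟩,
    fun i j a x ha hx ↦ smul_mem_freeIdemGrading i j a ha x hx⟩
  have iSup_eq_top : ⨆ j, freeIdemGrading A 𝒜 ι e s j = ⊤ :=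
    iSup_eq_top_of_span_eq_top 𝒜 smul_mem_freeIdemGrading
      (Set.forall_mem_range.2 fun k ↦ ⟨s k, idemGenerator_mem_freeIdemGrading he k⟩)
      span_range_idemGenerator
  rw [← AddMonoidHom.range_eq_top, eq_top_iff, ← iSup_eq_top]
  exact iSup_le fun j x hx ↦ ⟨of _ j ⟨x, hx⟩, DirectSum.coeAddMonoidHom_of _ j _⟩

end FreeIdemGrading

section GradedRadical

variable {A : Type u} [Ring A] {𝒜 : ℤ → AddSubgroup A} [GradedRing 𝒜]

theorem mem_gradedRadical_of_pos {i : ℤ} (hi : 0 < i) {a : A} (ha : a ∈ 𝒜 i) :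
    a ∈ gradedRadical A 𝒜 := by
  have decompose_eq_zero (l : ℤ) (hl : l ≤ 0) : decompose 𝒜 a l = 0 :=
    Subtype.ext (decompose_of_mem_ne 𝒜 ha (hl.trans_lt hi).ne')
  exact ⟨decompose_eq_zero 0 le_rfl ▸ zero_mem _, fun l hl ↦ decompose_eq_zero l hl.le⟩

theorem coe_mem_gradedRadical {r : ↥(𝒜 0)} (hr : r ∈ Ring.jacobson ↥(𝒜 0)) :
    (r : A) ∈ gradedRadical A 𝒜 := by
  refine ⟨?_, fun i hi ↦ Subtype.ext (decompose_of_mem_ne 𝒜 r.2 hi.ne')⟩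
  rwa [Ideal.jacobson_bot, show decompose 𝒜 (r : A) 0 = r from
    Subtype.ext (decompose_of_mem_same 𝒜 r.2)]

end GradedRadical

section GradedModule

variable {A : Type u} [Ring A] {𝒜 : ℤ → AddSubgroup A} [GradedRing 𝒜]
  {X : Type u} [AddCommGroup X] [Module A X] {𝒳 : ℤ → AddSubgroup X}

/-- Restriction of scalars along `A_0 → A`. -/
abbrev gradeZeroModule : Module ↥(𝒜 0) X :=
  Module.compHom X (SetLike.GradeZero.subring 𝒜).subtype

attribute [local instance] gradeZeroModule

theorem isScalarTower_gradeZero : IsScalarTower ↥(𝒜 0) A X :=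
  ⟨fun r a x ↦ mul_smul (r : A) a x⟩

attribute [local instance] isScalarTower_gradeZero

/-- The homogeneous part `X_j` as a module over `A_0`. -/
def IsGradedModule.degreePart (hX : IsGradedModule A 𝒜 X 𝒳) (j : ℤ) : Submodule ↥(𝒜 0) X :=
  { 𝒳 j with smul_mem' := fun r x hx ↦ zero_add j ▸ hX.2 0 j r x r.2 hx }

variable (A 𝒳) in
/-- The submodule `A X_{<j}`. -/
def lowerSpan (j : ℤ) : Submodule A X :=
  Submodule.span A (⋃ i < j, (𝒳 i : Set X))

/-- The `A_0`-submodule `rad(A_0) X_j + A X_{<j}`; its part in degree `j` is `(J X)_j`. -/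
def IsGradedModule.radicalPart (hX : IsGradedModule A 𝒜 X 𝒳) (j : ℤ) : Submodule ↥(𝒜 0) X :=
  Ring.jacobson ↥(𝒜 0) • hX.degreePart j ⊔ (lowerSpan A 𝒳 j).restrictScalars ↥(𝒜 0)

theorem IsGradedModule.eq_top_of_degreePart_le_sup_radicalPart (hX : IsGradedModule A 𝒜 X 𝒳)
    (hrad : IsNilpotent (Ring.jacobson ↥(𝒜 0))) {n : ℤ} (hn : ∀ j : ℤ, j < n → 𝒳 j = ⊥)
    {F : Submodule A X}
    (hF : ∀ j, hX.degreePart j ≤ F.restrictScalars ↥(𝒜 0) ⊔ hX.radicalPart j) : F = ⊤ := by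
  classical
  have degreePart_le (d : ℕ) :
      ∀ j : ℤ, j < n + d → hX.degreePart j ≤ F.restrictScalars ↥(𝒜 0) := by
    induction d with
    | zero =>
      intro j hj x (hx : x ∈ 𝒳 j)
      rw [hn j (by simpa using hj), AddSubgroup.mem_bot] at hx
      exact hx ▸ zero_mem _
    | succ d ih =>
      intro j hj
      have lowerSpan_le : lowerSpan A 𝒳 j ≤ F :=
        Submodule.span_le.2 (Set.iUnion₂_subset fun i hi ↦ ih i (by lia))
      exact le_of_le_sup_smul_of_isNilpotent hrad <| (hF j).trans <|
        sup_le le_sup_left (sup_le le_sup_right (le_sup_of_le_left lowerSpan_le))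
  let _ := hX.1.chooseDecomposition
  refine eq_top_iff.2 fun x _ ↦ ?_
  rw [← sum_support_decompose 𝒳 x]
  exact sum_mem fun j _ ↦ degreePart_le (j - n + 1).toNat j (by lia) (decompose 𝒳 x j).2

theorem IsGradedModule.exists_isIdempotentBasisMod_radicalPart [IsSemiprimaryRing ↥(𝒜 0)]
    (hX : IsGradedModule A 𝒜 X 𝒳) (j : ℤ) :
    ∃ (κ : Type u) (e : κ → ↥(𝒜 0)) (m : κ → X),
      IsIdempotentBasisMod (Ring.jacobson ↥(𝒜 0)) (hX.degreePart j) (hX.radicalPart j) e m := by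
  obtain ⟨n, hn⟩ := (IsSemiprimaryRing.isNilpotent : IsNilpotent (Ring.jacobson ↥(𝒜 0)))
  exact exists_isIdempotentBasisMod
    (fun r hr ↦ ⟨n, by simpa [hn] using Ideal.pow_mem_pow hr n⟩) le_sup_left

theorem IsGradedModule.smul_mem_span_image_compl_sup_radicalPart
    (hX : IsGradedModule A 𝒜 X 𝒳) (hneg : ∀ i : ℤ, i < 0 → 𝒜 i = ⊥)
    {κ : ℤ → Type*} {m : ∀ j, κ j → X} (hm : ∀ j l, m j l ∈ 𝒳 j)
    {k l : Σ j, κ j} (hl : l ≠ k) {a : A} (ha : a ∈ 𝒜 (k.1 - l.1)) :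
    a • m l.1 l.2 ∈ Submodule.span ↥(𝒜 0) (m k.1 '' {k.2}ᶜ) ⊔ hX.radicalPart k.1 := by
  obtain ⟨j, k⟩ := k
  obtain ⟨i, l⟩ := l
  rcases lt_trichotomy i j with hij | rfl | hij
  · have : m i l ∈ lowerSpan A 𝒳 j :=
      Submodule.subset_span (Set.mem_iUnion₂_of_mem hij (hm i l))
    exact Submodule.mem_sup_right (Submodule.mem_sup_right ((lowerSpan A 𝒳 j).smul_mem a this))
  · have : l ≠ k := fun h ↦ hl (h ▸ rfl)
    rw [sub_self] at ha
    exact Submodule.mem_sup_left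
      (Submodule.smul_mem _ (⟨a, ha⟩ : ↥(𝒜 0)) (Submodule.subset_span ⟨l, this, rfl⟩))
  · rw [hneg _ (sub_neg.2 hij), AddSubgroup.mem_bot] at ha
    rw [ha, zero_smul]
    exact zero_mem _

end GradedModule

section HomogeneousCover

variable {A : Type u} [Ring A] {𝒜 : ℤ → AddSubgroup A} [GradedRing 𝒜]
  {X : Type u} [AddCommGroup X] [Module A X] {𝒳 : ℤ → AddSubgroup X}
  {κ : ℤ → Type u} {e : ∀ j, κ j → ↥(𝒜 0)} {m : ∀ j, κ j → X}

attribute [local instance] gradeZeroModule isScalarTower_gradeZero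

variable {hX : IsGradedModule A 𝒜 X 𝒳}
  (hB : ∀ j, IsIdempotentBasisMod (Ring.jacobson ↥(𝒜 0)) (hX.degreePart j) (hX.radicalPart j)
    (e j) (m j))
include hB

theorem isIdempotentElem_coe (k : Σ j, κ j) : IsIdempotentElem (e k.1 k.2 : A) :=
  congrArg Subtype.val ((hB k.1).isIdempotentElem k.2)

theorem eq_zero_of_mem_freeIdemGrading_of_lt (hneg : ∀ i : ℤ, i < 0 → 𝒜 i = ⊥) {n j : ℤ}
    (hn : ∀ j : ℤ, j < n → 𝒳 j = ⊥) (hj : j < n)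
    {x : freeIdemModule A (Σ j, κ j) fun k ↦ (e k.1 k.2 : A)}
    (hx : x ∈ freeIdemGrading A 𝒜 _ _ Sigma.fst j) : x = 0 := by
  refine eq_zero_of_mem_freeIdemGrading hneg (n := n) (fun k ↦ ?_) hj hx
  by_contra! hk
  have : m k.1 k.2 ∈ 𝒳 k.1 := (hB k.1).mem k.2
  rw [hn _ hk] at this
  exact (hB k.1).ne_zero k.2 this

variable [DecidableEq (Σ j, κ j)]

variable (e m) in
/-- The homomorphism `⨁ j k, A (e j k) → X` with `e j k ↦ e j k • m j k`, where `e j k` is placed in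
degree `j`. -/
noncomputable abbrev gradedCover :
    freeIdemModule A (Σ j, κ j) (fun k ↦ (e k.1 k.2 : A)) →ₗ[A] X :=
  freeIdemLift fun k ↦ m k.1 k.2

theorem gradedCover_surjective (hrad : IsNilpotent (Ring.jacobson ↥(𝒜 0))) {n : ℤ}
    (hn : ∀ j : ℤ, j < n → 𝒳 j = ⊥) : Function.Surjective (gradedCover e m) := by
  refine LinearMap.range_eq_top.1
    (hX.eq_top_of_degreePart_le_sup_radicalPart hrad hn fun j ↦
      (hB j).le_sup.trans (sup_le_sup_right (Submodule.span_le.2 ?_) _))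
  rintro _ ⟨k, rfl⟩
  exact ⟨idemGenerator _ ⟨j, k⟩, (freeIdemLift_apply_idemGenerator _).trans ((hB j).smul_eq k)⟩

theorem coe_mem_gradedRadical_of_gradedCover_eq_zero (hneg : ∀ i : ℤ, i < 0 → 𝒜 i = ⊥) {j : ℤ}
    {x : freeIdemModule A (Σ j, κ j) fun k ↦ (e k.1 k.2 : A)}
    (hx : x ∈ freeIdemGrading A 𝒜 _ _ Sigma.fst j) (hfx : gradedCover e m x = 0)
    (k : Σ j, κ j) : (x k : A) ∈ gradedRadical A 𝒜 := by
  have hxk := hx k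
  rcases lt_trichotomy k.1 j with hk | rfl | hk
  · exact mem_gradedRadical_of_pos (sub_pos.2 hk) hxk
  · rw [sub_self] at hxk
    let r : ↥(𝒜 0) := ⟨x k, hxk⟩
    have others_mem : gradedCover e m (x - lof A _ _ k (x k)) ∈
        (Submodule.span ↥(𝒜 0) (m k.1 '' {k.2}ᶜ) ⊔ hX.radicalPart k.1).toAddSubgroup := by
      refine freeIdemLift_mem fun l ↦ ?_
      by_cases hl : l = k
      · subst hl
        simp
      · rw [DirectSum.sub_apply, lof_eq_of, of_eq_of_ne _ _ _ hl, sub_zero]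
        exact hX.smul_mem_span_image_compl_sup_radicalPart hneg (fun j ↦ (hB j).mem) hl (hx l)
    rw [map_sub, hfx, zero_sub, freeIdemLift_lof, neg_mem_iff] at others_mem
    have r_mul_mem := coe_mem_gradedRadical ((hB k.1).mul_mem k.2 r others_mem)
    have r_mul_eq : (x k : A) * e k.1 k.2 = x k := mul_eq_self_of_mem_span_singleton
      (isIdempotentElem_coe hB k) (x k).2
    rwa [← r_mul_eq]
  · rw [hneg _ (sub_neg.2 hk), AddSubgroup.mem_bot] at hxk
    exact hxk ▸ coe_mem_gradedRadical (zero_mem _)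

theorem gradedCover_mem {j : ℤ} {x : freeIdemModule A (Σ j, κ j) fun k ↦ (e k.1 k.2 : A)}
    (hx : x ∈ freeIdemGrading A 𝒜 _ _ Sigma.fst j) : gradedCover e m x ∈ 𝒳 j :=
  freeIdemLift_mem_of_mem_freeIdemGrading hX (fun k : Σ j, κ j ↦ (hB k.1).mem k.2) hx

theorem ker_gradedCover_le_span_smul (hneg : ∀ i : ℤ, i < 0 → 𝒜 i = ⊥) :
    LinearMap.ker (gradedCover e m) ≤ Submodule.span A
      {y | ∃ a ∈ gradedRadical A 𝒜, ∃ p, y = a • p} := by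
  have ker_eq := isGradedSubmodule_ker
    (isGradedModule_freeIdemGrading fun k : Σ j, κ j ↦ (e k.1 k.2).2).1 hX.1
    (gradedCover e m) fun j x ↦ gradedCover_mem hB
  refine (Submodule.toAddSubgroup_le _ _).1 (ker_eq.trans_le (iSup_le fun j x hx ↦ ?_))
  exact mem_span_smul_of_forall_coe_mem (isIdempotentElem_coe hB)
    (coe_mem_gradedRadical_of_gradedCover_eq_zero hB hneg hx.2 hx.1)

end HomogeneousCover

theorem stmt_2_general (A : Type u) [Ring A] (𝒜 : ℤ → AddSubgroup A) [GradedRing 𝒜]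
    (hneg : ∀ i : ℤ, i < 0 → 𝒜 i = ⊥) [IsSemiprimaryRing ↥(𝒜 0)]
    (X : Type u) [AddCommGroup X] [Module A X] (𝒳 : ℤ → AddSubgroup X)
    (hX : IsGradedModule A 𝒜 X 𝒳)
    (hbdd : ∃ n₀ : ℤ, ∀ j : ℤ, j < n₀ → 𝒳 j = ⊥) :
    ∃ (ι : Type u) (e : ι → A) (s : ι → ℤ)
      (f : freeIdemModule A ι e →ₗ[A] X),
      (∀ k, e k ∈ 𝒜 0 ∧ IsIdempotentElem (e k)) ∧
      IsGradedModule A 𝒜 (freeIdemModule A ι e) (freeIdemGrading A 𝒜 ι e s) ∧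
      Function.Surjective f ∧
      (∀ (j : ℤ) (x : freeIdemModule A ι e),
        x ∈ freeIdemGrading A 𝒜 ι e s j → f x ∈ 𝒳 j) ∧
      (LinearMap.ker f ≤ Submodule.span A
        {y : freeIdemModule A ι e | ∃ a ∈ gradedRadical A 𝒜,
          ∃ p : freeIdemModule A ι e, y = a • p}) ∧
      (∃ m : ℤ, ∀ j : ℤ, j < m →
        ∀ x ∈ LinearMap.ker f, x ∈ freeIdemGrading A 𝒜 ι e s j → x = 0) := by
  classical
  obtain ⟨n₀, hn₀⟩ := hbdd
  choose κ e m hB using hX.exists_isIdempotentBasisMod_radicalPart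
  exact ⟨Σ j, κ j, fun k ↦ e k.1 k.2, Sigma.fst, gradedCover e m,
    fun k ↦ ⟨(e k.1 k.2).2, isIdempotentElem_coe hB k⟩,
    isGradedModule_freeIdemGrading fun k ↦ (e k.1 k.2).2,
    gradedCover_surjective hB IsSemiprimaryRing.isNilpotent hn₀,
    fun j x ↦ gradedCover_mem hB,
    ker_gradedCover_le_span_smul hB hneg,
    n₀, fun j hj x _ ↦ eq_zero_of_mem_freeIdemGrading_of_lt hB hneg hn₀ hj⟩

theorem stmt_2 (A : Type u) [Ring A] (𝒜 : ℤ → AddSubgroup A) [GradedRing 𝒜]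
    (hneg : ∀ i : ℤ, i < 0 → 𝒜 i = ⊥) (hart : IsArtinianRing ↥(𝒜 0))
    (X : Type u) [AddCommGroup X] [Module A X] (𝒳 : ℤ → AddSubgroup X)
    (hX : IsGradedModule A 𝒜 X 𝒳)
    (hbdd : ∃ n₀ : ℤ, ∀ j : ℤ, j < n₀ → 𝒳 j = ⊥) :
    ∃ (ι : Type u) (e : ι → A) (s : ι → ℤ)
      (f : freeIdemModule A ι e →ₗ[A] X),
      (∀ k, e k ∈ 𝒜 0 ∧ IsIdempotentElem (e k)) ∧
      IsGradedModule A 𝒜 (freeIdemModule A ι e) (freeIdemGrading A 𝒜 ι e s) ∧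
      Function.Surjective f ∧
      (∀ (j : ℤ) (x : freeIdemModule A ι e),
        x ∈ freeIdemGrading A 𝒜 ι e s j → f x ∈ 𝒳 j) ∧
      (LinearMap.ker f ≤ Submodule.span A
        {y : freeIdemModule A ι e | ∃ a ∈ gradedRadical A 𝒜,
          ∃ p : freeIdemModule A ι e, y = a • p}) ∧
      (∃ m : ℤ, ∀ j : ℤ, j < m →
        ∀ x ∈ LinearMap.ker f, x ∈ freeIdemGrading A 𝒜 ι e s j → x = 0) := by
  have := hart
  exact stmt_2_general A 𝒜 hneg X 𝒳 hX hbdd
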